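/- arXiv:2411.00835 — 6 statements merged into one kernel-verified Lean document; each statement's English description precedes it below -/
import Mathlib

section
/- Let N and D be positive integers with N ≥ 2, let Ã ∈ ℝ^{N×N} be the matrix with every entry equal to 1/N (the degree-normalized adjacency matrix of the complete graph with self-loops on N nodes), and let W ∈ ℝ^{D×D} be any matrix. Then the class of functions f̂ : ℝ^{N×D} → ℝ of the form f̂ = MLP ∘ L, where L(X) = ÃXW and MLP ranges over all multilayer perceptrons with SiLU activation from ℝ^{N×D} to ℝ, is NOT a universal approximator in C(ℝ^{N×D}): there exist a continuous function f : ℝ^{N×D} → ℝ, an ε > 0, and a nonempty compact set K ⊂ ℝ^{N×D} such that every function f̂ in the class satisfies max_{X∈K} |f(X) − f̂(X)| ≥ ε. -/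
/-- The SiLU activation function: `SiLU(x) = x / (1 + e^{-x})`. -/
noncomputable def silu (x : ℝ) : ℝ := x / (1 + Real.exp (-x))

/-- `IsMLPLayer V k g` says that `g : V → ℝ^k` has the form
`A_L ∘ σ ∘ A_{L-1} ∘ ⋯ ∘ σ ∘ A_0` where each `A_i` is an affine map and `σ` applies
SiLU componentwise (the base case `L = 0` being a single affine map). -/
inductive IsMLPLayer (V : Type) [AddCommGroup V] [Module ℝ V] :
    (k : ℕ) → (V → (Fin k → ℝ)) → Prop
  | affine (k : ℕ) (A : V →ᵃ[ℝ] (Fin k → ℝ)) : IsMLPLayer V k ⇑A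
  | step (m k : ℕ) (A : (Fin m → ℝ) →ᵃ[ℝ] (Fin k → ℝ)) (g : V → Fin m → ℝ)
      (hg : IsMLPLayer V m g) : IsMLPLayer V k (fun v => A (fun i => silu (g v i)))

/-- A multilayer perceptron with SiLU activation from `V` to `ℝ`:
a map of the form `A_L ∘ σ ∘ A_{L-1} ∘ ⋯ ∘ σ ∘ A_0` with each `A_i` affine and
`σ` the componentwise SiLU activation. -/
def IsSiluMLP (V : Type) [AddCommGroup V] [Module ℝ V] (f : V → ℝ) : Prop :=
  (∃ A : V →ᵃ[ℝ] ℝ, f = ⇑A) ∨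
  (∃ (m : ℕ) (A : (Fin m → ℝ) →ᵃ[ℝ] ℝ) (g : V → Fin m → ℝ),
    IsMLPLayer V m g ∧ f = fun v => A (fun i => silu (g v i)))

/-- **No universal approximation via graph convolution alone.**
For `N ≥ 2`, `D ≥ 1`, `Ã` the matrix with all entries `1/N`, and any `W ∈ ℝ^{D×D}`,
the class of maps `MLP ∘ L` with `L(X) = Ã X W` and `MLP` a SiLU multilayer perceptron
is not a universal approximator in `C(ℝ^{N×D})`. -/
theorem stmt_0 (N D : ℕ) (hN : 2 ≤ N) (hD : 0 < D)
    (Atil : Matrix (Fin N) (Fin N) ℝ) (hA : ∀ i j, Atil i j = 1 / N)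
    (W : Matrix (Fin D) (Fin D) ℝ) :
    ∃ f : Matrix (Fin N) (Fin D) ℝ → ℝ, Continuous f ∧
      ∃ ε > (0 : ℝ), ∃ K : Set (Matrix (Fin N) (Fin D) ℝ), IsCompact K ∧ K.Nonempty ∧
        ∀ mlp : Matrix (Fin N) (Fin D) ℝ → ℝ, IsSiluMLP _ mlp →
          ∃ X ∈ K, ε ≤ |f X - mlp (Atil * X * W)| := by
  let i0 : Fin N := ⟨0, by omega⟩
  let i1 : Fin N := ⟨1, by omega⟩
  let d : Fin D := ⟨0, hD⟩
  have hne : i1 ≠ i0 := by simp [i0, i1]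
  let Y : Matrix (Fin N) (Fin D) ℝ := Matrix.single i0 d 1 - Matrix.single i1 d 1
  have hY : Atil * Y = 0 := by
    ext i j
    simp only [Matrix.mul_apply, hA, ← Finset.mul_sum, Matrix.zero_apply]
    simp only [Y, Matrix.sub_apply, Finset.sum_sub_distrib, Matrix.single_apply]
    by_cases h : d = j <;> simp [h]
  have hY1 : Y i0 d = 1 := by
    simp [Y, Matrix.single_apply, hne]
  refine ⟨fun X => X i0 d, by fun_prop, 1 / 2, by norm_num, {0, Y},
    (Set.toFinite _).isCompact, ⟨0, by simp⟩, ?_⟩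
  intro mlp _
  by_contra! hc
  have h0 := hc 0 (by simp)
  have h1 := hc Y (by simp)
  rw [hY] at h1
  simp only [hY1, Matrix.mul_zero, Matrix.zero_mul, Matrix.zero_apply] at h0 h1
  rw [abs_lt] at h0 h1
  linarith [h0.1, h1.2]
end

section
/- Let N and D be positive integers and let Ã ∈ ℝ^{N×N} be the matrix with every entry equal to 1/N (the degree-normalized adjacency matrix of the complete graph with self-loops on N nodes). Then there exists a weight matrix W ∈ ℝ^{D×D} such that the class of functions f̂ : ℝ^{N×D} → ℝ of the form f̂ = MLP ∘ L, where L(X) = ÃXW + X and MLP ranges over all multilayer perceptrons with SiLU activation from ℝ^{N×D} to ℝ, IS a universal approximator in C(ℝ^{N×D}): for every continuous f : ℝ^{N×D} → ℝ, every ε > 0, and every nonempty compact K ⊂ ℝ^{N×D}, some f̂ in the class satisfies max_{X∈K} |f(X) − f̂(X)| < ε. -/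
lemma silu_sub (t : ℝ) : silu t - silu (-t) = t := by
  unfold silu
  have h1 := Real.exp_pos t
  have h2 : Real.exp (-t) = (Real.exp t)⁻¹ := Real.exp_neg t
  rw [neg_neg, h2]
  field_simp
  ring

lemma silu_even_approx (η : ℝ) (hη : 0 < η) :
    ∃ δ > 0, ∀ s : ℝ, |s| < δ → |2 * (silu s + silu (-s)) - s ^ 2| ≤ η * s ^ 2 := by
  have hd : HasDerivAt (fun s : ℝ => 2 * (1 / (1 + Real.exp (-s)) - 1 / (1 + Real.exp s))) 1 0 := by
    have e1 : HasDerivAt (fun s : ℝ => 1 + Real.exp (-s)) (-1) 0 := by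
      have := ((hasDerivAt_neg (0 : ℝ)).exp).const_add 1
      simpa using this
    have e2 : HasDerivAt (fun s : ℝ => 1 + Real.exp s) 1 0 := by
      have := (Real.hasDerivAt_exp (0 : ℝ)).const_add 1
      simpa using this
    have := ((e1.inv (by positivity)).sub (e2.inv (by positivity))).const_mul 2
    refine (this.congr_deriv (by norm_num)).congr_of_eventuallyEq
      (Filter.Eventually.of_forall fun s => ?_)
    simp
  have ho := hd.isLittleO.def hη
  obtain ⟨δ, hδ, hb⟩ := Metric.eventually_nhds_iff.1 ho
  refine ⟨δ, hδ, fun s hs => ?_⟩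
  have := @hb s (by simpa [Real.dist_eq] using hs)
  simp only [Real.norm_eq_abs, smul_eq_mul, sub_zero, neg_zero, sub_self, mul_zero, mul_one] at this
  have key : 2 * (silu s + silu (-s)) - s ^ 2
      = s * (2 * (1 / (1 + Real.exp (-s)) - 1 / (1 + Real.exp s)) - s) := by
    unfold silu
    rw [neg_neg]; ring
  rw [key, abs_mul]
  calc _ ≤ |s| * (η * |s|) := mul_le_mul_of_nonneg_left this (abs_nonneg _)
    _ = η * s ^ 2 := by rw [← sq_abs s]; ring

/-- Scalar outputs of depth-`n` networks. -/
noncomputable def mlpS (V : Type) [AddCommGroup V] [Module ℝ V] : ℕ → Submodule ℝ (V → ℝ)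
  | 0 => Submodule.span ℝ (Set.range fun A : V →ᵃ[ℝ] ℝ => (A : V → ℝ))
  | n + 1 => Submodule.span ℝ ((fun f : V → ℝ => fun v => silu (f v)) '' (mlpS V n : Set (V → ℝ)))

section
variable {V : Type} [AddCommGroup V] [Module ℝ V]

lemma mlpS_silu {n : ℕ} {f : V → ℝ} (hf : f ∈ mlpS V n) :
    (fun v => silu (f v)) ∈ mlpS V (n + 1) :=
  Submodule.subset_span ⟨f, hf, rfl⟩

lemma mlpS_succ (n : ℕ) : mlpS V n ≤ mlpS V (n + 1) := by
  intro f hf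
  have h := Submodule.sub_mem _ (mlpS_silu hf) (mlpS_silu (Submodule.neg_mem _ hf))
  convert h using 1
  ext v
  simp [silu_sub]

lemma mlpS_mono : Monotone (mlpS V) := monotone_nat_of_le_succ mlpS_succ

lemma mlpS_zero_affine {f : V → ℝ} (hf : f ∈ mlpS V 0) : ∃ A : V →ᵃ[ℝ] ℝ, f = A := by
  refine Submodule.span_induction ?_ ?_ ?_ ?_ hf
  · rintro _ ⟨A, rfl⟩; exact ⟨A, rfl⟩
  · exact ⟨0, rfl⟩
  · rintro _ _ _ _ ⟨A, rfl⟩ ⟨B, rfl⟩; exact ⟨A + B, rfl⟩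
  · rintro c _ _ ⟨A, rfl⟩; exact ⟨c • A, rfl⟩

lemma mlpS_family {n m : ℕ} (g : Fin m → V → ℝ) (hg : ∀ i, g i ∈ mlpS V (n + 1)) :
    ∃ (k : ℕ) (h : Fin k → V → ℝ) (c : Fin m → Fin k → ℝ), (∀ j, h j ∈ mlpS V n) ∧
      ∀ i v, g i v = ∑ j, c i j * silu (h j v) := by
  classical
  choose T hT hgT using fun i => Submodule.mem_span_finite_of_mem_span (hg i)
  let U : Finset (V → ℝ) := Finset.univ.biUnion T
  have hU : ∀ u : U, ∃ f ∈ mlpS V n, (fun v => silu (f v)) = u.1 := by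
    rintro ⟨u, hu⟩
    obtain ⟨i, -, hi⟩ := Finset.mem_biUnion.1 hu
    exact hT i hi
  choose F hF hFu using hU
  let e := U.equivFin
  have hspan : ∀ i, ∃ c : Fin U.card → ℝ,
      ∑ j, c j • (fun v => silu (F (e.symm j) v)) = g i := by
    intro i
    rw [← Submodule.mem_span_range_iff_exists_fun]
    refine Submodule.span_mono ?_ (hgT i)
    intro u hu
    have hu' : u ∈ U := Finset.mem_biUnion.2 ⟨i, Finset.mem_univ _, hu⟩
    exact ⟨e ⟨u, hu'⟩, by simp [hFu]⟩
  choose c hc using hspan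
  refine ⟨U.card, fun j => F (e.symm j), c, fun j => hF _, fun i v => ?_⟩
  rw [← hc i]
  simp [Finset.sum_apply]

lemma mlpS_layer (n : ℕ) : ∀ {m : ℕ} (g : Fin m → V → ℝ), (∀ i, g i ∈ mlpS V n) →
    IsMLPLayer V m (fun v i => g i v) := by
  induction n with
  | zero =>
    intro m g hg
    choose A hA using fun i => mlpS_zero_affine (hg i)
    have : (fun v i => g i v) = ⇑(AffineMap.pi A) := by
      ext v i; simp [hA]
    rw [this]
    exact .affine _ _
  | succ n ih =>
    intro m g hg
    obtain ⟨k, h, c, hh, hc⟩ := mlpS_family g hg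
    have := IsMLPLayer.step k m (Matrix.toLin' (Matrix.of c)).toAffineMap _ (ih h hh)
    convert this using 1
    ext v i
    simp [hc, Matrix.mulVec, dotProduct]

lemma mlpS_isSiluMLP {n : ℕ} {f : V → ℝ} (hf : f ∈ mlpS V n) : IsSiluMLP V f := by
  obtain ⟨k, h, c, hh, hc⟩ := mlpS_family (m := 1) (fun _ => f) (fun _ => mlpS_succ n hf)
  refine Or.inr ⟨k, (∑ j, c 0 j • LinearMap.proj (R := ℝ) (φ := fun _ : Fin k => ℝ) j).toAffineMap,
    _, mlpS_layer n h hh, ?_⟩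
  ext v
  simp [hc 0 v]

variable [TopologicalSpace V]

/-- Functions on `K` uniformly approximable by networks. -/
def approxSet (K : Set V) : Set C(K, ℝ) :=
  {f | ∀ ε > 0, ∃ n, ∃ g ∈ mlpS V n, ∀ x : K, |f x - g x| < ε}

lemma approxSet_affine (K : Set V) (f : C(K, ℝ)) (A : V →ᵃ[ℝ] ℝ) (h : ∀ x : K, f x = A x) :
    f ∈ approxSet K := fun ε hε =>
  ⟨0, A, Submodule.subset_span ⟨A, rfl⟩, fun x => by simp [h, hε]⟩

lemma approxSet_add {K : Set V} {f g : C(K, ℝ)} (hf : f ∈ approxSet K) (hg : g ∈ approxSet K) :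
    f + g ∈ approxSet K := by
  intro ε hε
  obtain ⟨n, a, ha, hfa⟩ := hf (ε / 2) (by positivity)
  obtain ⟨m, b, hb, hgb⟩ := hg (ε / 2) (by positivity)
  refine ⟨max n m, a + b, Submodule.add_mem _ (mlpS_mono (le_max_left _ _) ha)
    (mlpS_mono (le_max_right _ _) hb), fun x => ?_⟩
  have h1 := abs_lt.1 (hfa x)
  have h2 := abs_lt.1 (hgb x)
  simp only [ContinuousMap.add_apply, Pi.add_apply]
  rw [abs_lt]; constructor <;> linarith

lemma approxSet_smul {K : Set V} {f : C(K, ℝ)} (c : ℝ) (hf : f ∈ approxSet K) :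
    c • f ∈ approxSet K := by
  intro ε hε
  obtain ⟨n, a, ha, hfa⟩ := hf (ε / (|c| + 1)) (by positivity)
  refine ⟨n, c • a, Submodule.smul_mem _ _ ha, fun x => ?_⟩
  have h1 := hfa x
  rw [lt_div_iff₀ (by positivity)] at h1
  simp only [ContinuousMap.smul_apply, Pi.smul_apply, smul_eq_mul]
  rw [← mul_sub, abs_mul]
  nlinarith [abs_nonneg (f x - a x)]

lemma approxSet_sq {K : Set V} [CompactSpace K] {f : C(K, ℝ)} (hf : f ∈ approxSet K) :
    f * f ∈ approxSet K := by
  intro ε hε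
  set M := ‖f‖ with hM
  have hM0 : 0 ≤ M := norm_nonneg _
  have hfM : ∀ x, |f x| ≤ M := fun x => f.norm_coe_le_norm x
  obtain ⟨n, g, hg, hfg⟩ := hf (min 1 (ε / (2 * (2 * M + 1)))) (by positivity)
  obtain ⟨δ, hδ, hs⟩ := silu_even_approx (ε / (4 * (M + 1) ^ 2)) (by positivity)
  set h := δ / (M + 2) with hh
  have hh0 : 0 < h := by positivity
  refine ⟨n + 1, (2 / h ^ 2) • ((fun v => silu ((h • g) v)) + fun v => silu ((-(h • g)) v)),
    Submodule.smul_mem _ _ (Submodule.add_mem _ (mlpS_silu (Submodule.smul_mem _ _ hg))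
      (mlpS_silu (Submodule.neg_mem _ (Submodule.smul_mem _ _ hg)))), fun x => ?_⟩
  have h1 := hfg x
  have h2 : |f x - g x| < 1 := lt_of_lt_of_le h1 (min_le_left _ _)
  have h3 : |f x - g x| < ε / (2 * (2 * M + 1)) := lt_of_lt_of_le h1 (min_le_right _ _)
  rw [lt_div_iff₀ (by positivity)] at h3
  have hgM : |g x| ≤ M + 1 := by
    have a1 := abs_lt.1 h2
    have a2 := abs_le.1 (hfM x)
    rw [abs_le]; constructor <;> linarith
  have hsq : |f x * f x - g x ^ 2| < ε / 2 := by
    have : f x * f x - g x ^ 2 = (f x - g x) * (f x + g x) := by ring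
    rw [this, abs_mul]
    have : |f x + g x| ≤ 2 * M + 1 := by
      have := abs_add_le (f x) (g x)
      linarith [hfM x]
    nlinarith [abs_nonneg (f x - g x)]
  have hsm : |h * g x| < δ := by
    rw [abs_mul, abs_of_pos hh0, hh, div_mul_eq_mul_div, div_lt_iff₀ (by positivity)]
    nlinarith
  have h4 := hs _ hsm
  have h5 : |2 / h ^ 2 * (silu (h * g x) + silu (-(h * g x))) - g x ^ 2| ≤ ε / 4 := by
    have e : 2 / h ^ 2 * (silu (h * g x) + silu (-(h * g x))) - g x ^ 2
        = (2 * (silu (h * g x) + silu (-(h * g x))) - (h * g x) ^ 2) / h ^ 2 := by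
      field_simp
    rw [e, abs_div, abs_of_pos (by positivity : 0 < h ^ 2), div_le_iff₀ (by positivity)]
    refine h4.trans ?_
    have : g x ^ 2 ≤ (M + 1) ^ 2 := by rw [← sq_abs]; gcongr
    calc ε / (4 * (M + 1) ^ 2) * (h * g x) ^ 2
        = ε / (4 * (M + 1) ^ 2) * (g x ^ 2) * h ^ 2 := by ring
      _ ≤ ε / (4 * (M + 1) ^ 2) * ((M + 1) ^ 2) * h ^ 2 := by gcongr
      _ = ε / 4 * h ^ 2 := by field_simp
  simp only [ContinuousMap.mul_apply, Pi.smul_apply, Pi.add_apply, Pi.neg_apply, smul_eq_mul]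
  have a1 := abs_lt.1 hsq
  have a2 := abs_le.1 h5
  rw [abs_lt]; constructor <;> linarith

lemma approxSet_mul {K : Set V} [CompactSpace K] {f g : C(K, ℝ)} (hf : f ∈ approxSet K)
    (hg : g ∈ approxSet K) : f * g ∈ approxSet K := by
  have h := approxSet_smul (1 / 2) (approxSet_add (approxSet_sq (approxSet_add hf hg))
    (approxSet_smul (-1) (approxSet_add (approxSet_sq hf) (approxSet_sq hg))))
  convert h using 1
  ext x
  simp
  ring

/-- The subalgebra of approximable functions. -/
def approxAlg (K : Set V) [CompactSpace K] : Subalgebra ℝ C(K, ℝ) where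
  carrier := approxSet K
  mul_mem' := approxSet_mul
  add_mem' := approxSet_add
  algebraMap_mem' r := approxSet_affine K _ (AffineMap.const ℝ V r) (fun x => by simp)

end

/-- **Universal approximation via graph convolution is possible with residual connections.**
For positive `N, D` and `Ã` the matrix with all entries `1/N`, there exists `W ∈ ℝ^{D×D}`
such that the class of maps `MLP ∘ L` with `L(X) = Ã X W + X` and `MLP` a SiLU multilayer
perceptron is a universal approximator in `C(ℝ^{N×D})`. -/
theorem stmt_1 (N D : ℕ) (hN : 0 < N) (hD : 0 < D)
    (Atil : Matrix (Fin N) (Fin N) ℝ) (hA : ∀ i j, Atil i j = 1 / N) :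
    ∃ W : Matrix (Fin D) (Fin D) ℝ,
      ∀ f : Matrix (Fin N) (Fin D) ℝ → ℝ, Continuous f →
        ∀ ε > (0 : ℝ), ∀ K : Set (Matrix (Fin N) (Fin D) ℝ), IsCompact K → K.Nonempty →
          ∃ mlp : Matrix (Fin N) (Fin D) ℝ → ℝ, IsSiluMLP _ mlp ∧
            ∀ X ∈ K, |f X - mlp (Atil * X * W + X)| < ε := by
  classical
  refine ⟨0, fun f hf ε hε K hK _ => ?_⟩
  haveI : CompactSpace K := isCompact_iff_compactSpace.1 hK
  have hsep : (approxAlg K).SeparatesPoints := by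
    intro x y hxy
    have : ∃ i j, x.1 i j ≠ y.1 i j := by
      by_contra hcon
      push Not at hcon
      exact hxy (Subtype.ext (Matrix.ext hcon))
    obtain ⟨i, j, hij⟩ := this
    let F : C(K, ℝ) := ⟨fun x => x.1 i j, by
      exact (continuous_apply_apply i j).comp continuous_subtype_val⟩
    refine ⟨F, ⟨F, ?_, rfl⟩, hij⟩
    exact approxSet_affine K F (Matrix.entryLinearMap ℝ ℝ i j).toAffineMap (fun x => rfl)
  obtain ⟨g, hg⟩ := ContinuousMap.exists_mem_subalgebra_near_continuous_of_separatesPoints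
    (approxAlg K) hsep (fun x : K => f x) (hf.comp continuous_subtype_val) (ε / 2) (by positivity)
  obtain ⟨n, m, hm, hgm⟩ := g.2 (ε / 2) (by positivity)
  refine ⟨m, mlpS_isSiluMLP hm, fun X hX => ?_⟩
  have h1 := hg ⟨X, hX⟩
  have h2 := hgm ⟨X, hX⟩
  rw [Real.norm_eq_abs] at h1
  rw [Matrix.mul_zero, zero_add]
  rw [abs_lt] at *
  constructor <;> linarith [h1.1, h1.2, h2.1, h2.2]
end

section
/- Let N and D be positive integers with N ≥ 2, let Ã ∈ ℝ^{N×N} be the matrix with every entry equal to 1/N, and let W ∈ ℝ^{D×D} be any matrix. Then even the full class {g ∘ L : g ∈ C(ℝ^{N×D}, ℝ)}, where L(X) = ÃXW and g ranges over ALL continuous functions from ℝ^{N×D} to ℝ, is not dense in C(ℝ^{N×D}, ℝ) for the topology of uniform convergence on compact sets: there exist a continuous f : ℝ^{N×D} → ℝ, an ε > 0, and a nonempty compact K ⊂ ℝ^{N×D} such that max_{X∈K} |f(X) − g(L(X))| ≥ ε for every continuous g : ℝ^{N×D} → ℝ. -/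
/-- For `N ≥ 2`, `D ≥ 1`, `Ã` the matrix with all entries `1/N` and any `W ∈ ℝ^{D×D}`,
even the full class `{g ∘ L : g ∈ C(ℝ^{N×D}, ℝ)}` with `L(X) = Ã X W` is not dense in
`C(ℝ^{N×D}, ℝ)` for the topology of uniform convergence on compact sets. -/
theorem stmt_4 (N D : ℕ) (hN : 2 ≤ N) (hD : 0 < D)
    (Atil : Matrix (Fin N) (Fin N) ℝ) (hA : ∀ i j, Atil i j = 1 / N)
    (W : Matrix (Fin D) (Fin D) ℝ) :
    ∃ f : Matrix (Fin N) (Fin D) ℝ → ℝ, Continuous f ∧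
      ∃ ε > (0 : ℝ), ∃ K : Set (Matrix (Fin N) (Fin D) ℝ), IsCompact K ∧ K.Nonempty ∧
        ∀ g : Matrix (Fin N) (Fin D) ℝ → ℝ, Continuous g →
          ∃ X ∈ K, ε ≤ |f X - g (Atil * X * W)| := by
  let i0 : Fin N := ⟨0, by omega⟩
  let i1 : Fin N := ⟨1, by omega⟩
  let d0 : Fin D := ⟨0, hD⟩
  have hne : i0 ≠ i1 := by simp [i0, i1]
  let X1 : Matrix (Fin N) (Fin D) ℝ :=
    Matrix.of fun i _ => (if i = i0 then (1 : ℝ) else 0) - (if i = i1 then (1 : ℝ) else 0)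
  have hX : Atil * X1 = 0 := by
    ext i j
    simp [Matrix.mul_apply, X1, hA, mul_sub, Finset.sum_sub_distrib]
  have hf : X1 i0 d0 = 1 := by simp [X1, hne]
  refine ⟨fun X => X i0 d0, by fun_prop, 1 / 2, by norm_num, {0, X1},
    (Set.toFinite _).isCompact, ⟨0, by simp⟩, ?_⟩
  intro g _
  by_contra! h
  have h0 := h 0 (by simp)
  have h1 := h X1 (by simp)
  simp only [hX, hf, Matrix.mul_zero, Matrix.zero_mul, Matrix.zero_apply] at h0 h1
  rw [abs_lt] at h0 h1
  linarith [h0.1, h1.2]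
end

section
/- Let D be a positive integer and let W̃ be a D×D random matrix whose entries are independent standard normal random variables (i.e., W̃ is distributed according to the product of D² standard Gaussian measures on ℝ^{D×D}). Then the probability that the largest singular value of W̃ satisfies s_max(W̃) ≤ 3·√D is at least 1 − e^{−D/2}. -/
open MeasureTheory ProbabilityTheory

lemma aux_gauss (a b : ℝ) (hb : 0 < 1 + 2 * b) :
    ∫⁻ x, ENNReal.ofReal (Real.exp (a * x - b * x ^ 2)) ∂(gaussianReal 0 1) =
      ENNReal.ofReal ((Real.sqrt (1 + 2 * b))⁻¹ * Real.exp (a ^ 2 / (2 * (1 + 2 * b)))) := by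
  set c := 1 + 2 * b with hc
  have hbc : b = (c - 1) / 2 := by rw [hc]; ring
  let v : NNReal := ⟨c⁻¹, by positivity⟩
  have hv : v ≠ 0 := by
    intro h
    have : c⁻¹ = 0 := congrArg NNReal.toReal h
    simp [hb.ne'] at this
  rw [gaussianReal_of_var_ne_zero 0 one_ne_zero,
    lintegral_withDensity_eq_lintegral_mul _ (measurable_gaussianPDF 0 1) (by fun_prop)]
  have key : ∀ x : ℝ, (gaussianPDF 0 1 * fun x => ENNReal.ofReal (Real.exp (a * x - b * x ^ 2))) x
      = ENNReal.ofReal ((Real.sqrt c)⁻¹ * Real.exp (a ^ 2 / (2 * c))) * gaussianPDF (a / c) v x := by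
    intro x
    simp only [Pi.mul_apply, gaussianPDF]
    rw [← ENNReal.ofReal_mul (gaussianPDFReal_nonneg _ _ _), ← ENNReal.ofReal_mul (by positivity)]
    congr 1
    simp only [gaussianPDFReal]
    have hvc : (v : ℝ) = c⁻¹ := rfl
    rw [hvc, NNReal.coe_one, Real.sqrt_mul (by positivity), Real.sqrt_mul (by positivity) c⁻¹, Real.sqrt_inv]
    have hs : 0 < Real.sqrt c := Real.sqrt_pos.2 hb
    have : Real.exp (-(x - 0) ^ 2 / (2 * 1)) * Real.exp (a * x - b * x ^ 2)
        = Real.exp (a ^ 2 / (2 * c)) * Real.exp (-(x - a / c) ^ 2 / (2 * c⁻¹)) := by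
      rw [← Real.exp_add, ← Real.exp_add]
      congr 1
      rw [hbc]
      field_simp
      ring
    rw [Real.sqrt_one, mul_assoc, this]
    field_simp
  simp_rw [key]
  rw [lintegral_const_mul _ (measurable_gaussianPDF _ _), lintegral_gaussianPDF_eq_one _ hv, mul_one]

lemma aux_pi {D : ℕ} {X : Type*} [MeasurableSpace X] (μ : Measure X) [IsProbabilityMeasure μ]
    (f : Fin D → X → ENNReal) (hf : ∀ i, Measurable (f i)) :
    ∫⁻ x, ∏ i, f i (x i) ∂(Measure.pi fun _ : Fin D => μ) = ∏ i, ∫⁻ y, f i y ∂μ := by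
  have h := lintegral_prod_eq_prod_lintegral_of_indepFun (μ := Measure.pi fun _ : Fin D => μ)
    Finset.univ (fun i (x : Fin D → X) => f i (x i))
    (iIndepFun_pi (X := f) (fun i => (hf i).aemeasurable))
    (fun i => (hf i).comp (measurable_pi_apply i))
  rw [h]
  refine Finset.prod_congr rfl fun i _ => ?_
  exact (measurePreserving_eval (fun _ : Fin D => μ) i).lintegral_comp (hf i)

lemma aux_exp_sum {D : ℕ} (g : Fin D → ℝ) :
    ENNReal.ofReal (Real.exp (∑ i, g i)) = ∏ i, ENNReal.ofReal (Real.exp (g i)) := by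
  rw [Real.exp_sum, ENNReal.ofReal_prod_of_nonneg (fun _ _ => (Real.exp_pos _).le)]

/-- Gaussian integral over a vector. -/
lemma aux_vec {D : ℕ} (z : Fin D → ℝ) (b : ℝ) (hb : 0 < 1 + 2 * b) :
    ∫⁻ x, ENNReal.ofReal (Real.exp (∑ j, (z j * x j - b * x j ^ 2)))
      ∂(Measure.pi fun _ : Fin D => gaussianReal 0 1) =
      ENNReal.ofReal ((Real.sqrt (1 + 2 * b))⁻¹ ^ D *
        Real.exp ((∑ j, z j ^ 2) / (2 * (1 + 2 * b)))) := by
  simp_rw [aux_exp_sum]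
  rw [aux_pi _ (fun j y => ENNReal.ofReal (Real.exp (z j * y - b * y ^ 2))) (by intro i; fun_prop)]
  simp_rw [aux_gauss _ b hb]
  rw [← ENNReal.ofReal_prod_of_nonneg (fun _ _ => by positivity), Finset.prod_mul_distrib,
    Finset.sum_div, Real.exp_sum]
  simp

lemma sqrt4 : Real.sqrt 4 = 2 := by
  rw [show (4 : ℝ) = 2 ^ 2 by norm_num]; exact Real.sqrt_sq (by norm_num)

/-- One row. -/
lemma aux_row {D : ℕ} (c : Fin D → ℝ) (hc : ∑ j, c j ^ 2 ≤ 1) :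
    ∫⁻ w, ENNReal.ofReal (Real.exp (3 / 8 * (∑ j, w j * c j) ^ 2))
      ∂(Measure.pi fun _ : Fin D => gaussianReal 0 1) ≤ 2 := by
  have hs : Real.sqrt (3 / 4) ^ 2 = 3 / 4 := Real.sq_sqrt (by norm_num)
  set s := Real.sqrt (3 / 4)
  have h1 : ∀ w : Fin D → ℝ, ENNReal.ofReal (Real.exp (3 / 8 * (∑ j, w j * c j) ^ 2)) =
      ∫⁻ g, ENNReal.ofReal (Real.exp (s * g * ∑ j, w j * c j)) ∂(gaussianReal 0 1) := by
    intro w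
    have := aux_gauss (s * ∑ j, w j * c j) 0 (by norm_num)
    rw [show (Real.sqrt (1 + 2 * 0))⁻¹ * Real.exp ((s * ∑ j, w j * c j) ^ 2 / (2 * (1 + 2 * 0)))
      = Real.exp (3 / 8 * (∑ j, w j * c j) ^ 2) by
        rw [mul_pow, hs]; norm_num; ring] at this
    rw [← this]
    refine lintegral_congr fun g => ?_
    congr 2; ring
  simp_rw [h1]
  rw [lintegral_lintegral_swap (by fun_prop)]
  have h2 : ∀ g : ℝ, ∫⁻ w, ENNReal.ofReal (Real.exp (s * g * ∑ j, w j * c j))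
      ∂(Measure.pi fun _ : Fin D => gaussianReal 0 1) ≤
      ENNReal.ofReal (Real.exp (0 * g - (-3 / 8) * g ^ 2)) := by
    intro g
    have := aux_vec (fun j => s * g * c j) 0 (by norm_num)
    calc _ = _ := by
            refine lintegral_congr fun w => ?_
            congr 2
            rw [Finset.mul_sum]
            refine Finset.sum_congr rfl fun j _ => ?_
            show _ = s * g * c j * w j - 0 * w j ^ 2
            ring
      _ = _ := this
      _ ≤ _ := by
            apply ENNReal.ofReal_le_ofReal
            have : ∑ j, (s * g * c j) ^ 2 = 3 / 4 * g ^ 2 * ∑ j, c j ^ 2 := by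
              rw [Finset.mul_sum]
              refine Finset.sum_congr rfl fun j _ => ?_
              rw [mul_pow, mul_pow, hs]
            rw [this]
            norm_num
            nlinarith [sq_nonneg g]
  refine (lintegral_mono h2).trans ?_
  rw [aux_gauss _ _ (by norm_num)]
  apply ENNReal.ofReal_le_of_le_toReal
  rw [show (1 + 2 * (-3 / 8) : ℝ) = 4⁻¹ by norm_num, Real.sqrt_inv, sqrt4]
  norm_num

lemma aux_mat {D : ℕ} (x : Fin D → ℝ) :
    ∫⁻ W, ENNReal.ofReal (Real.exp (3 / 8 * (∑ i, (∑ j, W i j * x j) ^ 2) / ∑ j, x j ^ 2))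
      ∂(Measure.pi fun _ : Fin D => Measure.pi fun _ : Fin D => gaussianReal 0 1) ≤ 2 ^ D := by
  set S := ∑ j, x j ^ 2 with hS
  have hS0 : 0 ≤ S := Finset.sum_nonneg fun _ _ => sq_nonneg _
  have hq : Real.sqrt S ^ 2 = S := Real.sq_sqrt hS0
  have h1 : ∀ W : Fin D → Fin D → ℝ,
      ENNReal.ofReal (Real.exp (3 / 8 * (∑ i, (∑ j, W i j * x j) ^ 2) / S)) =
      ∏ i, ENNReal.ofReal (Real.exp (3 / 8 * (∑ j, W i j * (x j / Real.sqrt S)) ^ 2)) := by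
    intro W
    rw [← aux_exp_sum]
    congr 2
    rw [← Finset.mul_sum, mul_div_assoc, Finset.sum_div]
    congr 1
    refine Finset.sum_congr rfl fun i _ => ?_
    simp_rw [← mul_div_assoc]
    rw [← Finset.sum_div, div_pow, hq]
  simp_rw [h1]
  rw [aux_pi (Measure.pi fun _ : Fin D => gaussianReal 0 1)
    (fun _ w => ENNReal.ofReal (Real.exp (3 / 8 * (∑ j, w j * (x j / Real.sqrt S)) ^ 2)))
    (by intro i; fun_prop)]
  refine (Finset.prod_le_prod' fun i _ => aux_row _ ?_).trans (by simp)
  simp_rw [div_pow, hq]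
  rw [← Finset.sum_div, ← hS]
  exact div_self_le_one S

lemma aux_pt {D : ℕ} (W : Fin D → Fin D → ℝ) (v x : Fin D → ℝ) (hv : ∑ i, v i ^ 2 = 1) :
    ∑ j, ((3 / 2 * ∑ i, W i j * v i) * x j - 3 / 2 * x j ^ 2) ≤
      3 / 8 * (∑ i, (∑ j, W i j * x j) ^ 2) / ∑ j, x j ^ 2 := by
  set N := ∑ i, (∑ j, W i j * x j) ^ 2 with hN
  set y := ∑ i, v i * ∑ j, W i j * x j with hy
  have hc : y ^ 2 ≤ N := by
    have := Finset.sum_mul_sq_le_sq_mul_sq Finset.univ v (fun i => ∑ j, W i j * x j)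
    rwa [hv, one_mul] at this
  have h1 : ∑ j, ((3 / 2 * ∑ i, W i j * v i) * x j - 3 / 2 * x j ^ 2) =
      3 / 2 * (y - ∑ j, x j ^ 2) := by
    rw [Finset.sum_sub_distrib, ← Finset.mul_sum, mul_sub]
    congr 1
    simp_rw [hy, Finset.mul_sum, Finset.sum_mul]
    rw [Finset.sum_comm]
    refine Finset.sum_congr rfl fun i _ => Finset.sum_congr rfl fun j _ => by ring
  rw [h1]
  have hS0 : 0 ≤ ∑ j, x j ^ 2 := Finset.sum_nonneg fun _ _ => sq_nonneg _
  rcases hS0.eq_or_lt with h | h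
  · have hx : ∀ j, x j = 0 := by
      intro j
      have := (Finset.sum_eq_zero_iff_of_nonneg (fun _ _ => sq_nonneg _)).1 h.symm j (Finset.mem_univ j)
      exact pow_eq_zero_iff (two_ne_zero) |>.1 this
    simp [hy, hx]
  · rw [le_div_iff₀ h]
    nlinarith [sq_nonneg (y - 2 * ∑ j, x j ^ 2)]

lemma aux_bad {D : ℕ} (W : Fin D → Fin D → ℝ)
    (h : ¬ ‖Matrix.toEuclideanCLM (𝕜 := ℝ) (Matrix.of W)‖ ≤ 3 * Real.sqrt D) :
    ∃ v : Fin D → ℝ, ∑ i, v i ^ 2 = 1 ∧ 9 * (D : ℝ) ≤ ∑ j, (∑ i, W i j * v i) ^ 2 := by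
  by_contra! hn
  apply h
  rw [← norm_star, ← map_star]
  refine ContinuousLinearMap.opNorm_le_bound _ (by positivity) fun u => ?_
  rcases eq_or_ne u 0 with rfl | hu
  · simp
  have hu' : 0 < ‖u‖ := norm_pos_iff.2 hu
  have h2 := hn (fun i => u i / ‖u‖) (by
    simp_rw [div_pow]
    rw [← Finset.sum_div, EuclideanSpace.real_norm_sq_eq]
    rw [← EuclideanSpace.real_norm_sq_eq]
    exact div_self (by positivity))
  have h3 : ‖Matrix.toEuclideanCLM (𝕜 := ℝ) (star (Matrix.of W)) u‖ ^ 2 =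
      ∑ j, (∑ i, W i j * u i) ^ 2 := by
    rw [EuclideanSpace.real_norm_sq_eq]
    refine Finset.sum_congr rfl fun j _ => ?_
    congr 1
  simp_rw [← mul_div_assoc, ← Finset.sum_div, div_pow] at h2
  rw [← Finset.sum_div, ← h3, div_lt_iff₀ (by positivity)] at h2
  refine abs_le_of_sq_le_sq' ?_ (by positivity) |>.2
  rw [mul_pow, mul_pow, Real.sq_sqrt (by positivity)]
  linarith

/-- **Concentration version of Gordon's theorem, specialized.** If `W̃` is a `D × D`
random matrix with i.i.d. standard normal entries, then with probability at least
`1 - e^{-D/2}` its largest singular value (operator norm) is at most `3 √D`. -/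
theorem stmt_11 (D : ℕ) (hD : 0 < D) :
    ENNReal.ofReal (1 - Real.exp (-(D : ℝ) / 2)) ≤
      (Measure.pi fun _ : Fin D => Measure.pi fun _ : Fin D => gaussianReal 0 1)
        {W : Fin D → Fin D → ℝ |
          ‖Matrix.toEuclideanCLM (𝕜 := ℝ) (Matrix.of W)‖ ≤ 3 * Real.sqrt D} := by
  set μ := (Measure.pi fun _ : Fin D => Measure.pi fun _ : Fin D => gaussianReal 0 1) with hμ
  set A := {W : Fin D → Fin D → ℝ |
          ‖Matrix.toEuclideanCLM (𝕜 := ℝ) (Matrix.of W)‖ ≤ 3 * Real.sqrt D} with hA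
  let f : (Fin D → Fin D → ℝ) → (Fin D → ℝ) → ENNReal := fun W x =>
    ENNReal.ofReal (Real.exp (3 / 8 * (∑ i, (∑ j, W i j * x j) ^ 2) / ∑ j, x j ^ 2))
  have hfm : Measurable (Function.uncurry f) := by
    simp only [f, Function.uncurry_def]
    fun_prop
  let F : (Fin D → Fin D → ℝ) → ENNReal := fun W =>
    ∫⁻ x, f W x ∂(Measure.pi fun _ : Fin D => gaussianReal 0 1)
  have hF : Measurable F := hfm.lintegral_prod_right'
  have hint : ∫⁻ W, F W ∂μ ≤ 2 ^ D := by
    simp only [F]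
    rw [lintegral_lintegral_swap hfm.aemeasurable]
    refine (lintegral_mono fun x => aux_mat x).trans ?_
    simp
  set K : ENNReal := ENNReal.ofReal ((2⁻¹ : ℝ) ^ D * Real.exp (81 / 32 * D)) with hK
  have hbad : Aᶜ ⊆ {W | K ≤ F W} := by
    intro W hW
    obtain ⟨v, hv, hz⟩ := aux_bad W hW
    show K ≤ F W
    have h := aux_vec (fun j => 3 / 2 * ∑ i, W i j * v i) (3 / 2) (by norm_num)
    calc K ≤ _ := by
            rw [hK]
            apply ENNReal.ofReal_le_ofReal
            rw [show (1 + 2 * (3 / 2) : ℝ) = 4 by norm_num, sqrt4]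
            gcongr
            simp_rw [mul_pow]
            rw [← Finset.mul_sum]
            linarith
      _ = _ := h.symm
      _ ≤ F W := lintegral_mono fun x => ENNReal.ofReal_le_ofReal
            (Real.exp_le_exp.2 (aux_pt W v x hv))
  have hmk : K * μ Aᶜ ≤ 2 ^ D :=
    (mul_le_mul_right (measure_mono hbad) K).trans ((mul_meas_ge_le_lintegral hF K).trans hint)
  have hE : μ Aᶜ ≤ ENNReal.ofReal (Real.exp (-(D : ℝ) / 2)) := by
    have hKpos : 0 < (2⁻¹ : ℝ) ^ D * Real.exp (81 / 32 * D) := by positivity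
    have hK0 : K ≠ 0 := by simpa [hK] using hKpos
    refine (ENNReal.mul_le_mul_iff_right hK0 ENNReal.ofReal_ne_top).1 (hmk.trans ?_)
    rw [hK, ← ENNReal.ofReal_mul hKpos.le, show (2 : ENNReal) ^ D = ENNReal.ofReal (2 ^ D) by
      rw [ENNReal.ofReal_pow (by norm_num)]; simp]
    apply ENNReal.ofReal_le_ofReal
    rw [mul_assoc, ← Real.exp_add]
    have h4 : (4 : ℝ) ≤ Real.exp 2 := by
      have := Real.exp_one_gt_d9
      rw [show (2 : ℝ) = 1 + 1 by norm_num, Real.exp_add]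
      nlinarith
    have h5 : (4 : ℝ) ^ D ≤ Real.exp (81 / 32 * D + -(D : ℝ) / 2) := by
      calc (4 : ℝ) ^ D ≤ Real.exp 2 ^ D := by gcongr
        _ = Real.exp (D * 2) := (Real.exp_nat_mul _ _).symm
        _ ≤ _ := Real.exp_le_exp.2 (by
          have : (0 : ℝ) ≤ D := by positivity
          linarith)
    calc (2 : ℝ) ^ D = 2⁻¹ ^ D * 4 ^ D := by rw [← mul_pow]; norm_num
      _ ≤ _ := by gcongr
  have hone : (1 : ENNReal) ≤ μ A + μ Aᶜ := by
    have : μ Set.univ = 1 := measure_univ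
    rw [← this, ← Set.union_compl_self A]
    exact measure_union_le _ _
  rw [ENNReal.ofReal_sub _ (Real.exp_pos _).le, ENNReal.ofReal_one]
  rw [tsub_le_iff_right]
  exact hone.trans (by gcongr)
end

section
/- Let N and D be positive integers, let Ã ∈ ℝ^{N×N} be the matrix with every entry equal to 1/N, fix 0 < ς < 1/(9·D^{3/2}), and let W be a D×D random matrix whose entries are independent Gaussian random variables with mean 0 and variance ς² (i.e., W is distributed according to the D²-fold product of the Gaussian measure N(0, ς²) on ℝ). Then with probability at least 1 − e^{−D/2}, the linear map L_W : ℝ^{N×D} → ℝ^{N×D} given by L_W(X) = ÃXW + X is injective; that is, the measure of the set of matrices W ∈ ℝ^{D×D} for which X ↦ ÃXW + X is injective is at least 1 − e^{−D/2}. -/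
open MeasureTheory ProbabilityTheory

lemma aux_row_s12 {n : ℕ} (μ : Measure ℝ) [IsProbabilityMeasure μ] [NullSingletonClass μ]
    (a : Fin n → ℝ) (ha : a ≠ 0) (c : ℝ) :
    ∀ᵐ w ∂(Measure.pi fun _ : Fin n => μ), ∑ i, w i * a i ≠ c := by
  obtain ⟨i, hi⟩ := Function.ne_iff.1 ha
  rcases n with _ | n
  · exact i.elim0
  have mp := measurePreserving_piFinSuccAbove (fun _ : Fin (n+1) => μ) i
  have key : ∀ᵐ p ∂(μ.prod (Measure.pi fun _ : Fin n => μ)),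
      p.1 * a i + ∑ j, p.2 j * a (i.succAbove j) ≠ c := by
    have hm : MeasurableSet {p : ℝ × (Fin n → ℝ) |
        p.1 * a i + ∑ j, p.2 j * a (i.succAbove j) ≠ c} := by
      apply (isOpen_ne_fun (by fun_prop) (by fun_prop)).measurableSet
    rw [Measure.ae_prod_iff_ae_ae hm]
    rw [Measure.ae_ae_comm hm]
    refine Filter.Eventually.of_forall fun y => ?_
    have : ∀ᵐ x ∂μ, x ≠ (c - ∑ j, y j * a (i.succAbove j)) / a i := by
      rw [ae_iff]; simp
    filter_upwards [this] with x hx h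
    apply hx
    rw [eq_div_iff hi]
    linarith
  have := mp.quasiMeasurePreserving.ae key
  filter_upwards [this] with w hw
  rw [Fin.sum_univ_succAbove _ i]
  exact hw

lemma aux_multi {n : ℕ} (μ : Measure ℝ) [IsProbabilityMeasure μ] [NullSingletonClass μ] (k : ℕ)
    (f : MultilinearMap ℝ (fun _ : Fin k => Fin n → ℝ) ℝ) (hf : f ≠ 0) (hc : Continuous f)
    (b : Fin k → Fin n → ℝ) :
    ∀ᵐ w ∂(Measure.pi fun _ : Fin k => Measure.pi fun _ : Fin n => μ), f (w + b) ≠ 0 := by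
  induction k with
  | zero =>
    refine Filter.Eventually.of_forall fun w h => hf ?_
    refine MultilinearMap.ext fun m => ?_
    rw [Subsingleton.elim m (w + b), h]
    rfl
  | succ k ih =>
    have mp := measurePreserving_piFinSuccAbove
      (fun _ : Fin (k+1) => Measure.pi fun _ : Fin n => μ) 0
    have key : ∀ᵐ p ∂((Measure.pi fun _ : Fin n => μ).prod
        (Measure.pi fun _ : Fin k => Measure.pi fun _ : Fin n => μ)),
        f (Fin.cons (p.1 + b 0) (p.2 + Fin.tail b) : Fin (k+1) → Fin n → ℝ) ≠ 0 := by
      have hm : MeasurableSet {p : (Fin n → ℝ) × (Fin k → Fin n → ℝ) |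
          f (Fin.cons (p.1 + b 0) (p.2 + Fin.tail b) : Fin (k+1) → Fin n → ℝ) ≠ 0} := by
        refine (isOpen_ne_fun (hc.comp ?_) continuous_const).measurableSet
        refine continuous_pi fun i => ?_
        refine Fin.cases ?_ (fun j => ?_) i
        · simp only [Fin.cons_zero]; fun_prop
        · simp only [Fin.cons_succ, Pi.add_apply]; fun_prop
      rw [Measure.ae_prod_iff_ae_ae hm]
      obtain ⟨m, hfm⟩ : ∃ m, f m ≠ 0 := by
        by_contra! h
        exact hf (MultilinearMap.ext h)
      let g : (Fin n → ℝ) →ₗ[ℝ] ℝ := f.toLinearMap m 0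
      have hg : ∀ v, g v = f.curryLeft v (Fin.tail m) := by
        intro v
        simp only [g, MultilinearMap.toLinearMap_apply, MultilinearMap.curryLeft_apply]
        congr 1
        rw [← Fin.cons_self_tail m, Fin.update_cons_zero, Fin.tail_cons]
      have hgs : ∀ v : Fin n → ℝ, g v = ∑ i, v i * g (Pi.single i 1) := by
        intro v
        conv_lhs => rw [pi_eq_sum_univ' v]
        simp
      have ha : (fun i => g (Pi.single i 1)) ≠ 0 := by
        intro h
        apply hfm
        have h1 : g (m 0) = 0 := by
          rw [hgs]
          exact Finset.sum_eq_zero fun i _ => by rw [show g (Pi.single i 1) = 0 from congrFun h i, mul_zero]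
        simpa [g] using h1
      filter_upwards [aux_row_s12 μ _ ha (- g (b 0))] with v hv
      have hne : f.curryLeft (v + b 0) ≠ 0 := by
        intro h
        apply hv
        rw [← hgs]
        have h2 : g (v + b 0) = 0 := by rw [hg, h]; rfl
        rw [map_add] at h2
        linarith
      refine ih _ hne ?_ (Fin.tail b)
      refine hc.comp (f := fun x : Fin k → Fin n → ℝ =>
        (Fin.cons (v + b 0) x : Fin (k+1) → Fin n → ℝ)) ?_
      refine continuous_pi fun i => ?_
      refine Fin.cases ?_ (fun j => ?_) i
      · simp only [Fin.cons_zero]; fun_prop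
      · simp only [Fin.cons_succ]; fun_prop
    have := mp.quasiMeasurePreserving.ae key
    filter_upwards [this] with w hw
    convert hw using 2
    ext i
    refine Fin.cases ?_ (fun j => ?_) i
    · rfl
    · rfl

theorem aux_main (N D : ℕ) (hN : 0 < N) 
    (Atil : Matrix (Fin N) (Fin N) ℝ) (hA : ∀ i j, Atil i j = 1 / N)
    (v : NNReal) (hv : v ≠ 0) :
    ENNReal.ofReal (1 - Real.exp (-(D : ℝ) / 2)) ≤
      (Measure.pi fun _ : Fin D => Measure.pi fun _ : Fin D =>
          gaussianReal 0 v)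
        {W : Fin D → Fin D → ℝ |
          Function.Injective
            (fun X : Matrix (Fin N) (Fin D) ℝ => Atil * X * Matrix.of W + X)} := by
  have := nullSingletonClass_gaussianReal (μ := 0) hv
  have hdet : ∀ᵐ W ∂(Measure.pi fun _ : Fin D => Measure.pi fun _ : Fin D =>
      gaussianReal 0 v), (Matrix.of W + 1).det ≠ 0 := by
    refine aux_multi (gaussianReal 0 v) D
      (Matrix.detRowAlternating (n := Fin D) (R := ℝ)).toMultilinearMap ?_ ?_
      (1 : Matrix (Fin D) (Fin D) ℝ)
    · intro h
      have h1 : (1 : Matrix (Fin D) (Fin D) ℝ).det = 0 := DFunLike.congr_fun h _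
      simp at h1
    · exact Continuous.matrix_det (A := fun X : Matrix (Fin D) (Fin D) ℝ => X) continuous_id
  have hAA : Atil * Atil = Atil := by
    ext i j
    have : (N : ℝ) ≠ 0 := by positivity
    simp [Matrix.mul_apply, hA]
    field_simp
  have hae : ∀ᵐ W ∂(Measure.pi fun _ : Fin D => Measure.pi fun _ : Fin D =>
      gaussianReal 0 v), W ∈ {W : Fin D → Fin D → ℝ |
          Function.Injective
            (fun X : Matrix (Fin N) (Fin D) ℝ => Atil * X * Matrix.of W + X)} := by
    filter_upwards [hdet] with W hW X Y hXY
    have hu : IsUnit (Matrix.of W + 1).det := isUnit_iff_ne_zero.2 hW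
    simp only at hXY
    have h1 := congrArg (fun Z => Atil * Z) hXY
    simp only [Matrix.mul_add, ← Matrix.mul_assoc, hAA] at h1
    have h2 : (Atil * X) * (Matrix.of W + 1) = (Atil * Y) * (Matrix.of W + 1) := by
      simpa [Matrix.mul_add] using h1
    have h3 : Atil * X = Atil * Y := by
      have := congrArg (fun Z => Z * (Matrix.of W + 1)⁻¹) h2
      simpa only [Matrix.mul_nonsing_inv_cancel_right _ _ hu] using this
    rw [h3] at hXY
    exact add_left_cancel hXY
  refine le_trans ?_ (measure_congr (Filter.eventuallyEq_univ.2 hae)).ge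
  rw [measure_univ]
  rw [← ENNReal.ofReal_one]
  exact ENNReal.ofReal_le_ofReal (by linarith [Real.exp_pos (-(D : ℝ) / 2)])

/-- **Injectivity regained (random initialization).** Let `Ã` be the matrix with all
entries `1/N`, fix `0 < ς < 1/(9 D^{3/2})`, and let `W` be a `D × D` random matrix with
i.i.d. Gaussian `N(0, ς²)` entries. Then, with probability at least `1 - e^{-D/2}`, the
linear map `X ↦ Ã X W + X` on `ℝ^{N×D}` is injective. -/
theorem stmt_12 (N D : ℕ) (hN : 0 < N) (hD : 0 < D)
    (Atil : Matrix (Fin N) (Fin N) ℝ) (hA : ∀ i j, Atil i j = 1 / N)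
    (ς : ℝ) (hς0 : 0 < ς) (hς1 : ς < 1 / (9 * (D : ℝ) ^ ((3 : ℝ) / 2))) :
    ENNReal.ofReal (1 - Real.exp (-(D : ℝ) / 2)) ≤
      (Measure.pi fun _ : Fin D => Measure.pi fun _ : Fin D =>
          gaussianReal 0 ⟨ς ^ 2, sq_nonneg ς⟩)
        {W : Fin D → Fin D → ℝ |
          Function.Injective
            (fun X : Matrix (Fin N) (Fin D) ℝ => Atil * X * Matrix.of W + X)} := by
  have hv : (⟨ς ^ 2, sq_nonneg ς⟩ : NNReal) ≠ 0 := by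
    intro h
    have : ς ^ 2 = 0 := congrArg NNReal.toReal h
    exact hς0.ne' (by simpa using this)
  exact aux_main N D hN Atil hA _ hv
end

section
/- Let N and D be positive integers, let Ã ∈ ℝ^{N×N} be the matrix with every entry equal to 1/N, fix 0 < ς < 1/(9·D^{3/2}), and let W be a D×D random matrix whose entries are independent Gaussian random variables with mean 0 and variance ς². Then with probability at least 1 − e^{−D/2} over the draw of W, the class of functions f̂ : ℝ^{N×D} → ℝ of the form f̂ = MLP ∘ L_W, where L_W(X) = ÃXW + X and MLP ranges over all multilayer perceptrons with SiLU activation from ℝ^{N×D} to ℝ, is dense in C(ℝ^{N×D}, ℝ) for the topology of uniform convergence on compact sets; that is, the measure of the set of W ∈ ℝ^{D×D} for which this class is a universal approximator is at least 1 − e^{−D/2}. -/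
open MeasureTheory ProbabilityTheory


lemma pi_ac_aux {E : Type} [MeasurableSpace E] (μ ν : Measure E) [SigmaFinite μ] [SigmaFinite ν]
    (h : μ ≪ ν) (n : ℕ) :
    (Measure.pi fun _ : Fin n => μ) ≪ (Measure.pi fun _ : Fin n => ν) := by
  induction n with
  | zero => rw [Measure.pi_of_empty, Measure.pi_of_empty]
  | succ n ih =>
    rw [← (measurePreserving_piFinSuccAbove (fun _ : Fin (n+1) => μ) 0).symm.map_eq,
      ← (measurePreserving_piFinSuccAbove (fun _ : Fin (n+1) => ν) 0).symm.map_eq]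
    exact (h.prod ih).map (MeasurableEquiv.measurable _)

lemma ae_det_aux (D : ℕ) :
    ∀ᵐ W : Fin D → Fin D → ℝ, (Matrix.of W + 1).det ≠ 0 := by
  have hcont : Continuous fun p : (Fin D → Fin D → ℝ) × ℝ =>
      (Matrix.of p.1 + p.2 • (1 : Matrix (Fin D) (Fin D) ℝ)).det := by
    apply Continuous.matrix_det
    apply Continuous.add
    · exact continuous_fst
    · exact continuous_snd.smul continuous_const
  have h1 : ∀ᵐ W : Fin D → Fin D → ℝ, ∀ᵐ t : ℝ,
      (Matrix.of W + t • (1 : Matrix (Fin D) (Fin D) ℝ)).det ≠ 0 := by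
    refine Filter.Eventually.of_forall fun W => ?_
    have hfin : {t : ℝ | ¬ (Matrix.of W + t • (1 : Matrix (Fin D) (Fin D) ℝ)).det ≠ 0}.Finite := by
      refine (Polynomial.finite_setOfPred_isRoot (p := (-(Matrix.of W)).charpoly)
        (Matrix.charpoly_monic _).ne_zero).subset ?_
      intro t ht
      simp only [not_not, Set.mem_ofPred_eq] at ht
      simp only [Set.mem_ofPred_eq, Polynomial.IsRoot, Matrix.eval_charpoly]
      rw [← ht]
      congr 1
      rw [sub_neg_eq_add, add_comm, Matrix.scalar_apply, ← Matrix.smul_one_eq_diagonal]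
    exact hfin.measure_zero _
  have h2 := (Measure.ae_ae_comm (μ := (volume : Measure (Fin D → Fin D → ℝ)))
    (ν := (volume : Measure ℝ))
    (p := fun W t => (Matrix.of W + t • (1 : Matrix (Fin D) (Fin D) ℝ)).det ≠ 0)
    (hcont.measurable (measurableSet_singleton (0:ℝ)).compl)).1 h1
  obtain ⟨t, ht⟩ := h2.exists
  have h3 := (measurePreserving_add_right (volume : Measure (Fin D → Fin D → ℝ))
    (fun i j => (1 - t) * (1 : Matrix (Fin D) (Fin D) ℝ) i j)).quasiMeasurePreserving.ae ht
  filter_upwards [h3] with W hW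
  convert hW using 2
  ext i j
  simp [Matrix.add_apply]
  ring

lemma gauss_aux (D : ℕ) (v : NNReal) (hv : v ≠ 0) :
    (Measure.pi fun _ : Fin D => Measure.pi fun _ : Fin D => gaussianReal 0 v)
      {W : Fin D → Fin D → ℝ | (Matrix.of W + 1).det ≠ 0} = 1 := by
  have hac : (Measure.pi fun _ : Fin D => Measure.pi fun _ : Fin D => gaussianReal 0 v) ≪
      (volume : Measure (Fin D → Fin D → ℝ)) :=
    pi_ac_aux _ _ (pi_ac_aux _ _ (gaussianReal_absolutelyContinuous 0 hv) D) D
  have hae := hac.ae_le (ae_det_aux D)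
  rw [← measure_univ (μ := (Measure.pi fun _ : Fin D => Measure.pi fun _ : Fin D =>
          gaussianReal 0 v))]
  exact measure_congr (Filter.eventuallyEq_univ.2 hae)

lemma silu_sub_neg (x : ℝ) : silu x - silu (-x) = x := by
  unfold silu
  have h1 : (0:ℝ) < Real.exp x := Real.exp_pos x
  rw [Real.exp_neg, neg_neg]
  field_simp
  ring

lemma silu_sq_aux (t : ℝ) (ht : |t| ≤ 1) : |silu t + silu (-t) - t ^ 2 / 2| ≤ 2 * |t| ^ 3 := by
  have h1 : (0:ℝ) < Real.exp t := Real.exp_pos t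
  have e : silu t + silu (-t) - t ^ 2 / 2 =
      t * (2 * (Real.exp t - 1 - t) - t * (Real.exp t - 1)) / (2 * (Real.exp t + 1)) := by
    unfold silu
    rw [Real.exp_neg, neg_neg]
    field_simp
    ring
  have a1 := Real.abs_exp_sub_one_le ht
  have a2 := Real.abs_exp_sub_one_sub_id_le ht
  rw [e, abs_div, abs_of_pos (by positivity : 0 < 2 * (Real.exp t + 1)), div_le_iff₀ (by positivity),
    abs_mul]
  have a3 : |2 * (Real.exp t - 1 - t) - t * (Real.exp t - 1)| ≤ 4 * |t| ^ 2 := by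
    calc _ ≤ |2 * (Real.exp t - 1 - t)| + |t * (Real.exp t - 1)| := abs_sub _ _
      _ ≤ 2 * |t| ^ 2 + |t| * (2 * |t|) := by
        rw [abs_mul, abs_mul, abs_two, sq_abs]; gcongr
      _ = _ := by ring
  have a4 : 0 ≤ |t| ^ 3 * Real.exp t := by positivity
  calc |t| * _ ≤ |t| * (4 * |t| ^ 2) := by gcongr
    _ ≤ _ := by nlinarith

lemma silu_continuous : Continuous silu := by
  unfold silu
  refine continuous_id.div (by fun_prop) fun x => ?_
  positivity

/-- Scalar functions computed by depth-`d` networks. -/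
noncomputable def netSpace (V : Type) [AddCommGroup V] [Module ℝ V] : ℕ → Submodule ℝ (V → ℝ)
  | 0 => Submodule.span ℝ {f | ∃ A : V →ᵃ[ℝ] ℝ, f = ⇑A}
  | d + 1 => Submodule.span ℝ {f | ∃ g ∈ netSpace V d, f = fun v => silu (g v)}

section
variable {V : Type} [AddCommGroup V] [Module ℝ V]

lemma netSpace_zero_mem (f : V → ℝ) (hf : f ∈ netSpace V 0) : ∃ A : V →ᵃ[ℝ] ℝ, f = ⇑A := by
  unfold netSpace at hf
  induction hf using Submodule.span_induction with
  | mem x h => exact h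
  | zero => exact ⟨0, by simp⟩
  | add x y _ _ hx hy =>
    obtain ⟨A, rfl⟩ := hx
    obtain ⟨B, rfl⟩ := hy
    exact ⟨A + B, by simp⟩
  | smul a x _ hx =>
    obtain ⟨A, rfl⟩ := hx
    exact ⟨a • A, by simp⟩

lemma netSpace_silu {d : ℕ} {f : V → ℝ} (hf : f ∈ netSpace V d) :
    (fun v => silu (f v)) ∈ netSpace V (d + 1) :=
  Submodule.subset_span ⟨f, hf, rfl⟩

lemma netSpace_succ (d : ℕ) : netSpace V d ≤ netSpace V (d + 1) := by
  intro f hf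
  have h := (netSpace V (d+1)).sub_mem (netSpace_silu hf) (netSpace_silu ((netSpace V d).neg_mem hf))
  convert h using 1
  ext v
  simp [silu_sub_neg]

lemma netSpace_mono : Monotone (netSpace V) := monotone_nat_of_le_succ netSpace_succ

lemma netSpace_layer (d : ℕ) : ∀ (k : ℕ) (g : V → Fin k → ℝ),
    (∀ j, (fun v => g v j) ∈ netSpace V d) → IsMLPLayer V k g := by
  induction d with
  | zero =>
    intro k g hg
    choose A hA using fun j => netSpace_zero_mem _ (hg j)
    have : g = ⇑(AffineMap.pi A) := by
      ext v j
      exact congrFun (hA j) v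
    rw [this]
    exact IsMLPLayer.affine _ _
  | succ d ih =>
    intro k g hg
    have : ∀ j, ∃ (n : ℕ) (c : Fin n → ℝ) (h : Fin n → V → ℝ), (∀ i, h i ∈ netSpace V d) ∧
        ∀ v, g v j = ∑ i, c i * silu (h i v) := by
      intro j
      obtain ⟨n, c, q, hq⟩ := Submodule.mem_span_set'.1 (hg j)
      choose p hp hp' using fun i => (q i).2
      refine ⟨n, c, p, hp, fun v => ?_⟩
      have := congrFun hq v
      simp only [Finset.sum_apply, Pi.smul_apply, smul_eq_mul, hp'] at this
      exact this.symm
    choose n c h hh hs using this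
    let e := Fintype.equivFin (Σ j : Fin k, Fin (n j))
    let L : (Fin (Fintype.card (Σ j : Fin k, Fin (n j))) → ℝ) →ₗ[ℝ] (Fin k → ℝ) :=
      LinearMap.pi fun j => ∑ i : Fin (n j), c j i • LinearMap.proj (e ⟨j, i⟩)
    have hl := ih _ (fun v i => h (e.symm i).1 (e.symm i).2 v) (fun i => hh _ _)
    have := IsMLPLayer.step _ _ L.toAffineMap _ hl
    convert this using 1
    ext v j
    simp only [L, hs, LinearMap.coe_toAffineMap, LinearMap.pi_apply, LinearMap.sum_apply,
      LinearMap.smul_apply, LinearMap.proj_apply, smul_eq_mul]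
    refine Finset.sum_congr rfl fun i _ => ?_
    rw [Equiv.symm_apply_apply]

lemma netSpace_isSiluMLP (d : ℕ) (f : V → ℝ) (hf : f ∈ netSpace V d) : IsSiluMLP V f := by
  right
  refine ⟨2, ((LinearMap.proj (0 : Fin 2) : (Fin 2 → ℝ) →ₗ[ℝ] ℝ) - LinearMap.proj (1 : Fin 2)).toAffineMap,
    fun v => ![f v, - f v], netSpace_layer d _ _ ?_, ?_⟩
  · intro j
    fin_cases j
    · exact hf
    · exact (netSpace V d).neg_mem hf
  · ext v
    simp [silu_sub_neg]

variable [TopologicalSpace V] [T2Space V] [IsTopologicalAddGroup V] [ContinuousSMul ℝ V]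
  [FiniteDimensional ℝ V]

/-- Pullbacks of network functions along `L`. -/
def netPull {X : Type} [TopologicalSpace X] (L : X → V) : Submodule ℝ C(X, ℝ) where
  carrier := {φ | ∃ d, ∃ f ∈ netSpace V d, ∀ x, φ x = f (L x)}
  zero_mem' := ⟨0, 0, Submodule.zero_mem _, fun _ => rfl⟩
  add_mem' := by
    rintro a b ⟨d, f, hf, h⟩ ⟨d', f', hf', h'⟩
    exact ⟨max d d', f + f', Submodule.add_mem _ (netSpace_mono (le_max_left _ _) hf)
      (netSpace_mono (le_max_right _ _) hf'), fun x => by simp [h, h']⟩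
  smul_mem' := by
    rintro c a ⟨d, f, hf, h⟩
    exact ⟨d, c • f, Submodule.smul_mem _ _ hf, fun x => by simp [h]⟩

lemma netPull_sq {X : Type} [TopologicalSpace X] [CompactSpace X] (L : X → V)
    (φ : C(X, ℝ)) (hφ : φ ∈ netPull L) : φ * φ ∈ (netPull L).topologicalClosure := by
  rw [← SetLike.mem_coe, Submodule.topologicalClosure_coe, Metric.mem_closure_iff]
  intro ε hε
  obtain ⟨M, hM1, hM⟩ : ∃ M : ℝ, 1 ≤ M ∧ ∀ x, |φ x| ≤ M :=
    ⟨max 1 ‖φ‖, le_max_left _ _, fun x => (φ.norm_coe_le_norm x).trans (le_max_right _ _)⟩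
  have hM0 : 0 < M := by linarith
  obtain ⟨h, h0, h1, h2⟩ : ∃ h : ℝ, 0 < h ∧ h * M ≤ 1 ∧ 4 * h * M ^ 3 < ε := by
    refine ⟨min (1 / M) (ε / (8 * M ^ 3)), by positivity, ?_, ?_⟩
    · calc _ ≤ 1 / M * M := by gcongr; exact min_le_left _ _
        _ = 1 := by field_simp
    · calc _ ≤ 4 * (ε / (8 * M ^ 3)) * M ^ 3 := by gcongr; exact min_le_right _ _
        _ = ε / 2 := by field_simp; norm_num
        _ < ε := by linarith
  obtain ⟨d, f, hf, hfx⟩ := hφ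
  let ψ : C(X, ℝ) := ⟨fun x => 2 / h ^ 2 * (silu (h * φ x) + silu (-(h * φ x))), by
    have := silu_continuous
    fun_prop⟩
  refine ⟨ψ, ⟨d + 1, (2 / h ^ 2) • ((fun v => silu ((h • f) v)) + fun v => silu ((-(h • f)) v)),
    Submodule.smul_mem _ _ (Submodule.add_mem _ (netSpace_silu (Submodule.smul_mem _ _ hf))
      (netSpace_silu (Submodule.neg_mem _ (Submodule.smul_mem _ _ hf)))),
      fun x => by simp [ψ, hfx]⟩, ?_⟩
  rw [ContinuousMap.dist_lt_iff hε]
  intro x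
  rw [dist_comm, Real.dist_eq]
  have ht : |h * φ x| ≤ h * M := by
    rw [abs_mul, abs_of_pos h0]; gcongr; exact hM x
  have key := silu_sq_aux (h * φ x) (ht.trans h1)
  have e : ψ x - (φ * φ) x =
      2 / h ^ 2 * (silu (h * φ x) + silu (-(h * φ x)) - (h * φ x) ^ 2 / 2) := by
    simp only [ψ, ContinuousMap.coe_mk, ContinuousMap.mul_apply]
    field_simp
  rw [e, abs_mul, abs_of_pos (by positivity)]
  calc _ ≤ 2 / h ^ 2 * (2 * (h * M) ^ 3) := by
        gcongr
        exact key.trans (by gcongr)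
    _ = 4 * h * M ^ 3 := by field_simp; norm_num
    _ < ε := h2

lemma netPull_sq' {X : Type} [TopologicalSpace X] [CompactSpace X] (L : X → V)
    (φ : C(X, ℝ)) (hφ : φ ∈ (netPull L).topologicalClosure) :
    φ * φ ∈ (netPull L).topologicalClosure := by
  have := map_mem_closure (f := fun φ : C(X, ℝ) => φ * φ) (s := (netPull L : Set C(X, ℝ)))
    (t := ((netPull L).topologicalClosure : Set C(X, ℝ))) (x := φ) (by fun_prop) hφ
    (fun φ h => netPull_sq L φ h)
  rwa [(netPull L).isClosed_topologicalClosure.closure_eq] at this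

lemma netPull_mul {X : Type} [TopologicalSpace X] [CompactSpace X] (L : X → V)
    (φ ψ : C(X, ℝ)) (hφ : φ ∈ (netPull L).topologicalClosure)
    (hψ : ψ ∈ (netPull L).topologicalClosure) :
    φ * ψ ∈ (netPull L).topologicalClosure := by
  have a := netPull_sq' L _ (Submodule.add_mem _ hφ hψ)
  have b := netPull_sq' L _ (Submodule.sub_mem _ hφ hψ)
  have := Submodule.smul_mem _ (1/4 : ℝ) (Submodule.sub_mem _ a b)
  convert this using 1
  ext x
  simp
  ring

lemma netPull_affine {X : Type} [TopologicalSpace X] (L : X → V) (φ : C(X, ℝ)) (A : V →ᵃ[ℝ] ℝ)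
    (h : ∀ x, φ x = A (L x)) : φ ∈ netPull L :=
  ⟨0, A, Submodule.subset_span ⟨A, rfl⟩, h⟩

/-- The closure as a subalgebra. -/
noncomputable def netAlg {X : Type} [TopologicalSpace X] [CompactSpace X] (L : X → V) :
    Subalgebra ℝ C(X, ℝ) where
  carrier := (netPull L).topologicalClosure
  mul_mem' := fun {a b} ha hb => netPull_mul L a b ha hb
  add_mem' := fun {_ _} ha hb => Submodule.add_mem _ ha hb
  algebraMap_mem' := fun r => (netPull L).le_topologicalClosure
    (netPull_affine L _ (AffineMap.const ℝ V r) (fun x => by simp))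

lemma silu_universal {X : Type} [TopologicalSpace X] [CompactSpace X] (L : X → V)
    (hL : Continuous L) (hinj : Function.Injective L) (f : C(X, ℝ)) (ε : ℝ) (hε : 0 < ε) :
    ∃ mlp : V → ℝ, IsSiluMLP V mlp ∧ ∀ x, |f x - mlp (L x)| < ε := by
  have hsep : (netAlg L).SeparatesPoints := by
    intro x y hxy
    let b := Module.finBasis ℝ V
    have : ∃ i, b.repr (L x) i ≠ b.repr (L y) i := by
      by_contra! hcon
      exact hxy (hinj (b.repr.injective (Finsupp.ext hcon)))
    obtain ⟨i, hi⟩ := this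
    let φ : C(X, ℝ) := ⟨fun x => b.coord i (L x),
      (LinearMap.continuous_of_finiteDimensional (b.coord i)).comp hL⟩
    refine ⟨φ, ⟨φ, (netPull L).le_topologicalClosure
      (netPull_affine L φ (b.coord i).toAffineMap (fun x => rfl)), rfl⟩, hi⟩
  have htop := ContinuousMap.subalgebra_topologicalClosure_eq_top_of_separatesPoints _ hsep
  have hf : f ∈ (netAlg L).topologicalClosure := htop ▸ Algebra.mem_top
  have hcl : IsClosed (netAlg L : Set C(X, ℝ)) := (netPull L).isClosed_topologicalClosure
  rw [← SetLike.mem_coe, Subalgebra.topologicalClosure_coe, hcl.closure_eq] at hf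
  have hf' : f ∈ closure (netPull L : Set C(X, ℝ)) := hf
  obtain ⟨φ, ⟨d, g, hg, hφ⟩, hd⟩ := Metric.mem_closure_iff.1 hf' ε hε
  refine ⟨g, netSpace_isSiluMLP d g hg, fun x => ?_⟩
  rw [← hφ, ← Real.dist_eq]
  exact (ContinuousMap.dist_lt_iff hε).1 hd x

end

/-- **Universality regained (random initialization).** Let `Ã` be the matrix with all
entries `1/N`, fix `0 < ς < 1/(9 D^{3/2})`, and let `W` be a `D × D` random matrix with
i.i.d. Gaussian `N(0, ς²)` entries. Then, with probability at least `1 - e^{-D/2}`, the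
class of maps `MLP ∘ L_W`, where `L_W(X) = Ã X W + X` and `MLP` ranges over SiLU
multilayer perceptrons `ℝ^{N×D} → ℝ`, is dense in `C(ℝ^{N×D}, ℝ)` for the topology of
uniform convergence on compact sets. -/
theorem stmt_13 (N D : ℕ) (hN : 0 < N) (hD : 0 < D)
    (Atil : Matrix (Fin N) (Fin N) ℝ) (hA : ∀ i j, Atil i j = 1 / N)
    (ς : ℝ) (hς0 : 0 < ς) (hς1 : ς < 1 / (9 * (D : ℝ) ^ ((3 : ℝ) / 2))) :
    ENNReal.ofReal (1 - Real.exp (-(D : ℝ) / 2)) ≤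
      (Measure.pi fun _ : Fin D => Measure.pi fun _ : Fin D =>
          gaussianReal 0 ⟨ς ^ 2, sq_nonneg ς⟩)
        {W : Fin D → Fin D → ℝ |
          ∀ f : Matrix (Fin N) (Fin D) ℝ → ℝ, Continuous f →
            ∀ ε > (0 : ℝ), ∀ K : Set (Matrix (Fin N) (Fin D) ℝ), IsCompact K → K.Nonempty →
              ∃ mlp : Matrix (Fin N) (Fin D) ℝ → ℝ, IsSiluMLP _ mlp ∧
                ∀ X ∈ K, |f X - mlp (Atil * X * Matrix.of W + X)| < ε} := by
  have hsub : ∀ W : Fin D → Fin D → ℝ, (Matrix.of W + 1).det ≠ 0 →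
      Function.Injective fun X : Matrix (Fin N) (Fin D) ℝ => Atil * X * Matrix.of W + X := by
    intro W hW X Y hXY
    have hN' : (N : ℝ) ≠ 0 := by positivity
    have hAA : Atil * Atil = Atil := by
      ext i j
      simp [Matrix.mul_apply, hA]
      field_simp
    have hu : IsUnit (Matrix.of W + 1) := (Matrix.isUnit_iff_isUnit_det _).2 (isUnit_iff_ne_zero.2 hW)
    have h1 : ∀ X : Matrix (Fin N) (Fin D) ℝ,
        Atil * (Atil * X * Matrix.of W + X) = (Atil * X) * (Matrix.of W + 1) := by
      intro X
      rw [Matrix.mul_add, Matrix.mul_add, Matrix.mul_one, ← Matrix.mul_assoc, ← Matrix.mul_assoc, hAA]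
    have h2 : (Atil * X) * (Matrix.of W + 1) = (Atil * Y) * (Matrix.of W + 1) := by
      rw [← h1, ← h1]; exact congrArg (Atil * ·) hXY
    have h3 : Atil * X = Atil * Y := by
      have h4 := congrArg (· * (Matrix.of W + 1)⁻¹) h2
      simpa [Matrix.mul_assoc, Matrix.mul_nonsing_inv _ (isUnit_iff_ne_zero.2 hW)] using h4
    have h5 : Atil * X * Matrix.of W + X = Atil * Y * Matrix.of W + Y := hXY
    rw [h3] at h5
    exact add_left_cancel h5
  refine le_trans ?_ (measure_mono (s := {W | (Matrix.of W + 1).det ≠ 0}) ?_)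
  · have hv : (⟨ς ^ 2, sq_nonneg ς⟩ : NNReal) ≠ 0 := by
      intro h
      have h2 : ς ^ 2 = 0 := congrArg NNReal.toReal h
      exact absurd h2 (by positivity)
    have h1 := gauss_aux D _ hv
    rw [h1, ENNReal.ofReal_le_one]
    linarith [Real.exp_pos (-(D : ℝ) / 2)]
  · intro W hW f hf ε hε K hK _
    have : CompactSpace K := isCompact_iff_compactSpace.1 hK
    obtain ⟨mlp, hm, hm'⟩ := silu_universal
      (fun X : K => Atil * (X : Matrix (Fin N) (Fin D) ℝ) * Matrix.of W + (X : Matrix (Fin N) (Fin D) ℝ))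
      (by fun_prop)
      ((hsub W hW).comp Subtype.val_injective)
      ⟨fun X : K => f X, hf.comp continuous_subtype_val⟩ ε hε
    exact ⟨mlp, hm, fun X hX => hm' ⟨X, hX⟩⟩
end
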